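/- For integers n ≥ 2, k ≥ 1, q ≥ 0 with n ≥ k: (1/n!) · Σ over triples (T, c, m) of a labelled tree T on n vertices, an injective k-tuple c of vertices, and a function m assigning 2q ordered marks to vertices, of ∏_{i=1}^n (d_i(T) + 1_{i∈c} + m(i) - 1)! equals binomial(2n-1, n-k) · binomial(2n+2q+k-3, 2n-1) · (2q+k-2)!, where m(i) counts the marks at vertex i. -/

import Mathlib

open scoped Classical

/-- degree -/
noncomputable def dg {n : ℕ} (G : SimpleGraph (Fin n)) (i : Fin n) : ℕ :=
  ∑ j : Fin n, if G.Adj i j then 1 else 0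

/-- number of occurrences of a value in a word -/
noncomputable def ct {m n : ℕ} (e : Fin m → Fin n) (i : Fin n) : ℕ :=
  ∑ j : Fin m, if e j = i then 1 else 0

lemma dg_eq_degree {n : ℕ} (G : SimpleGraph (Fin n)) (i : Fin n) : dg G i = G.degree i := by
  rw [dg, ← SimpleGraph.card_neighborFinset_eq_degree, SimpleGraph.neighborFinset_eq_filter]
  simp

lemma dg_eq_ncard {n : ℕ} (G : SimpleGraph (Fin n)) (i : Fin n) :
    (G.neighborSet i).ncard = dg G i := by
  rw [dg_eq_degree, ← SimpleGraph.card_neighborSet_eq_degree, Set.ncard_eq_toFinset_card',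
    Set.toFinset_card]

lemma isTree_iff_dg {n : ℕ} (G : SimpleGraph (Fin n)) :
    G.IsTree ↔ G.Connected ∧ ∑ i, dg G i + 2 = 2 * n := by
  rw [SimpleGraph.isTree_iff_connected_and_card]
  simp only [dg_eq_degree, SimpleGraph.sum_degrees_eq_twice_card_edges]
  rw [Nat.card_eq_fintype_card, ← SimpleGraph.edgeFinset_card, Nat.card_eq_fintype_card,
    Fintype.card_fin]
  constructor <;> rintro ⟨h, h'⟩ <;> refine ⟨h, by omega⟩

/-- attach a leaf -/
noncomputable def att {n : ℕ} (v : Fin (n + 1)) (w : Fin n) (G : SimpleGraph (Fin n)) :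
    SimpleGraph (Fin (n + 1)) :=
  G.map v.succAboveEmb ⊔ SimpleGraph.edge v (v.succAbove w)

section att
variable {n : ℕ} (v : Fin (n + 1)) (w : Fin n) (G : SimpleGraph (Fin n))

lemma att_adj_left (j : Fin n) : (att v w G).Adj v (v.succAbove j) ↔ j = w := by
  simp only [att, SimpleGraph.sup_adj, SimpleGraph.map_adj, SimpleGraph.edge_adj,
    Fin.coe_succAboveEmb]
  constructor
  · rintro (⟨_, a, b, h, h1, h2⟩ | h)
    · exact absurd h1 (Fin.succAbove_ne v a)
    · rcases h with ⟨⟨_, h⟩ | ⟨_, h⟩, _⟩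
      · exact Fin.succAbove_right_injective h
      · exact absurd h (Fin.succAbove_ne v j)
  · rintro rfl
    right
    exact ⟨Or.inl (by simp), (Fin.succAbove_ne v j).symm⟩

lemma att_adj (i j : Fin n) :
    (att v w G).Adj (v.succAbove i) (v.succAbove j) ↔ G.Adj i j := by
  simp only [att, SimpleGraph.sup_adj, SimpleGraph.map_adj, SimpleGraph.edge_adj,
    Fin.coe_succAboveEmb]
  constructor
  · rintro (⟨_, a, b, h, h1, h2⟩ | h)
    · rwa [← Fin.succAbove_right_injective h1, ← Fin.succAbove_right_injective h2]
    · rcases h with ⟨⟨h, _⟩ | ⟨_, h⟩, _⟩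
      · exact absurd h (Fin.succAbove_ne v i)
      · exact absurd h (Fin.succAbove_ne v j)
  · intro h
    exact Or.inl ⟨fun e => h.ne (Fin.succAbove_right_injective e), i, j, h, rfl, rfl⟩

lemma dg_att_self : dg (att v w G) v = 1 := by
  rw [dg, Fin.sum_univ_succAbove _ v]
  simp [att_adj_left]

lemma dg_att (i : Fin n) : dg (att v w G) (v.succAbove i) = dg G i + if i = w then 1 else 0 := by
  rw [dg, Fin.sum_univ_succAbove _ v]
  simp only [att_adj, SimpleGraph.adj_comm _ (v.succAbove i) v, att_adj_left]
  rw [dg, add_comm]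

lemma att_isTree (h : G.IsTree) : (att v w G).IsTree := by
  rw [isTree_iff_dg] at h ⊢
  obtain ⟨hc, hs⟩ := h
  constructor
  · rw [SimpleGraph.connected_iff_exists_forall_reachable]
    refine ⟨v.succAbove w, fun x => ?_⟩
    rcases Fin.eq_self_or_eq_succAbove v x with rfl | ⟨y, rfl⟩
    · exact ((att_adj_left x w G w).2 rfl).symm.reachable
    · let f : G →g att v w G := ⟨v.succAbove, fun h => (att_adj v w G _ _).2 h⟩
      exact (hc.preconnected w y).map f
  · rw [Fin.sum_univ_succAbove _ v, dg_att_self]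
    simp only [dg_att, Finset.sum_add_distrib]
    simp
    omega

lemma comap_isTree (T : SimpleGraph (Fin (n + 1))) (h : T.IsTree) (hv : dg T v = 1) :
    (T.comap v.succAbove).IsTree := by
  refine ⟨?_, h.isAcyclic.of_comap v.succAboveEmb⟩
  have h1 : (T.induce {v}ᶜ).Connected :=
    h.connected.induce_compl_singleton_of_degree_eq_one (by rw [← dg_eq_degree, hv])
  let f : T.comap v.succAbove ≃g T.induce {v}ᶜ :=
    ⟨finSuccAboveEquiv v, by
      intro a b
      have e : ∀ a, ((finSuccAboveEquiv v a : {x // x ≠ v}) : Fin (n + 1)) = v.succAbove a :=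
        fun a => by rw [finSuccAboveEquiv_apply]
      simp only [SimpleGraph.comap_adj, SimpleGraph.induce_adj]
      exact (e a) ▸ (e b) ▸ Iff.rfl⟩
  exact f.connected_iff.2 h1

lemma att_comap (T : SimpleGraph (Fin (n + 1))) (hv : dg T v = 1) :
    ∃ w, att v w (T.comap v.succAbove) = T := by
  rw [dg_eq_degree, SimpleGraph.degree_eq_one_iff_existsUnique_adj] at hv
  obtain ⟨u, hu, hu'⟩ := hv
  obtain ⟨w, rfl⟩ := Fin.exists_succAbove_eq (show u ≠ v from hu.ne')
  have key : ∀ j, (T.Adj v (v.succAbove j) ↔ j = w) := fun j =>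
    ⟨fun h => Fin.succAbove_right_injective (hu' _ h), fun h => h ▸ hu⟩
  refine ⟨w, ?_⟩
  ext x y
  rcases Fin.eq_self_or_eq_succAbove v x with h' | ⟨a, rfl⟩ <;>
  rcases Fin.eq_self_or_eq_succAbove v y with h | ⟨b, rfl⟩
  · subst h h'; simp
  · subst h'; rw [att_adj_left, key]
  · subst h; rw [SimpleGraph.adj_comm, att_adj_left, SimpleGraph.adj_comm, key]
  · rw [att_adj]; simp

lemma att_inj {w w' : Fin n} {G G' : SimpleGraph (Fin n)} (h : att v w G = att v w' G') :
    w = w' ∧ G = G' := by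
  constructor
  · rw [← att_adj_left v w' G', ← h, att_adj_left]
  · ext i j
    rw [← att_adj v w, h, att_adj]

end att

abbrev Tr (n : ℕ) := {G : SimpleGraph (Fin n) // G.IsTree}

lemma tree_side {n : ℕ} (v : Fin (n + 1)) (d : Fin (n + 1) → ℕ) (hv : d v = 0) :
    Nonempty ({p : Fin n × Tr n // ∀ i, dg p.2.1 i + (if i = p.1 then 1 else 0)
        = d (v.succAbove i) + 1} ≃ {T : Tr (n + 1) // ∀ i, dg T.1 i = d i + 1}) := by
  refine ⟨Equiv.ofBijective (fun p => ⟨⟨att v p.1.1 p.1.2.1, att_isTree _ _ _ p.1.2.2⟩, ?_⟩) ⟨?_, ?_⟩⟩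
  · rw [Fin.forall_iff_succAbove v]
    refine ⟨by rw [dg_att_self, hv], fun i => ?_⟩
    rw [dg_att, p.2]
  · rintro ⟨⟨w, G, hG⟩, hp⟩ ⟨⟨w', G', hG'⟩, hp'⟩ h
    simp only [Subtype.mk.injEq] at h
    obtain ⟨rfl, rfl⟩ := att_inj v h
    rfl
  · rintro ⟨⟨T, hT⟩, h⟩
    have hv1 : dg T v = 1 := by rw [h, hv]
    obtain ⟨w, hw⟩ := att_comap v T hv1
    refine ⟨⟨⟨w, ⟨_, comap_isTree v T hT hv1⟩⟩, fun i => ?_⟩, ?_⟩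
    · simp only
      rw [← dg_att v, hw]
      exact h _
    · simp only [hw]

lemma ct_cons {m n : ℕ} (w : Fin n) (e : Fin m → Fin n) (i : Fin n) :
    ct (Fin.cons w e : Fin (m + 1) → Fin n) i = ct e i + if i = w then 1 else 0 := by
  simp only [ct, Fin.sum_univ_succ, Fin.cons_zero, Fin.cons_succ, eq_comm (a := i)]
  rw [add_comm]

lemma word_side {m n : ℕ} (v : Fin (n + 1)) (d : Fin (n + 1) → ℕ) (hv : d v = 0) :
    Nonempty ({p : Fin n × (Fin m → Fin n) // ∀ i, ct p.2 i + (if i = p.1 then 1 else 0)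
        = d (v.succAbove i)} ≃ {e : Fin (m + 1) → Fin (n + 1) // ∀ i, ct e i = d i}) := by
  refine ⟨Equiv.ofBijective (fun p => ⟨fun j => v.succAbove ((Fin.cons p.1.1 p.1.2 : Fin (m+1) → Fin n) j), ?_⟩) ⟨?_, ?_⟩⟩
  · rw [Fin.forall_iff_succAbove v]
    refine ⟨by simp [ct, hv], fun i => ?_⟩
    rw [← p.2, ← ct_cons]
    simp only [ct, Fin.succAbove_right_inj]
  · rintro ⟨⟨w, e⟩, hp⟩ ⟨⟨w', e'⟩, hp'⟩ h
    simp only [Subtype.mk.injEq] at h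
    have h2 : (Fin.cons w e : Fin (m+1) → Fin n) = Fin.cons w' e' :=
      funext fun j => Fin.succAbove_right_injective (congrFun h j)
    obtain ⟨rfl, rfl⟩ := Fin.cons_inj.1 h2
    rfl
  · rintro ⟨e, h⟩
    have h0 : ∀ j, e j ≠ v := by
      intro j hj
      have := h v
      rw [hv, ct, Finset.sum_eq_zero_iff] at this
      simpa [hj] using this j (Finset.mem_univ _)
    choose f hf using fun j => Fin.exists_succAbove_eq (h0 j)
    refine ⟨⟨⟨f 0, Fin.tail f⟩, fun i => ?_⟩, ?_⟩
    · simp only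
      rw [← ct_cons, Fin.cons_self_tail, ← h]
      simp only [ct, ← hf, Fin.succAbove_right_inj]
    · simp [hf]

lemma ct_sum {m n : ℕ} (e : Fin m → Fin n) : ∑ i, ct e i = m := by
  simp only [ct]
  rw [Finset.sum_comm]
  simp

lemma pruefer (m : ℕ) : ∃ σ : Tr (m + 2) ≃ (Fin m → Fin (m + 2)),
    ∀ T i, dg T.1 i = ct (σ T) i + 1 := by
  induction m with
  | zero =>
    have htop : ∀ T : Tr 2, T.1 = ⊤ := by
      rintro ⟨T, hT⟩
      have hc := hT.connected.preconnected
      have h01 : T.Adj 0 1 := by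
        obtain ⟨u, hu⟩ := hc.exists_adj_of_nontrivial (0 : Fin 2)
        have : u = 1 := by
          have := hu.ne
          omega
        exact this ▸ hu
      ext a b
      fin_cases a <;> fin_cases b <;> simp [h01, h01.symm]
    have hd : ∀ T : Tr 2, ∀ i, dg T.1 i = 1 := by
      intro T i
      rw [htop T]
      fin_cases i <;> simp [dg]
    have ht : (⊤ : SimpleGraph (Fin 2)).IsTree := by
      rw [isTree_iff_dg]
      refine ⟨SimpleGraph.connected_top, by simp [dg]⟩
    haveI : Unique (Tr 2) := ⟨⟨⟨⊤, ht⟩⟩, fun T => Subtype.ext (htop T)⟩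
    refine ⟨Equiv.ofUnique _ _, fun T i => ?_⟩
    rw [hd]
    simp [ct]
  | succ m ih =>
    obtain ⟨σ, hσ⟩ := ih
    have key : ∀ d : Fin (m + 3) → ℕ,
        Nonempty ({T : Tr (m + 3) // (fun i => dg T.1 i) = fun i => d i + 1} ≃
          {e : Fin (m + 1) → Fin (m + 3) // ct e = d}) := by
      intro d
      simp only [funext_iff]
      by_cases hd : ∃ v, d v = 0
      · obtain ⟨v, hv⟩ := hd
        obtain ⟨A⟩ := tree_side v d hv
        obtain ⟨B⟩ := word_side (m := m) v d hv
        refine ⟨A.symm.trans (Equiv.trans ?_ B)⟩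
        refine Equiv.subtypeEquiv (Equiv.prodCongr (Equiv.refl _) σ) ?_
        rintro ⟨w, T⟩
        refine forall_congr' fun i => ?_
        simp only [Equiv.prodCongr_apply, Prod.map, Equiv.refl_apply]
        rw [hσ]
        omega
      · have hge : m + 3 ≤ ∑ i, d i := by
          calc m + 3 = ∑ i : Fin (m + 3), 1 := by simp
            _ ≤ _ := Finset.sum_le_sum fun i _ => by
              have : d i ≠ 0 := fun h => hd ⟨i, h⟩
              omega
        haveI : IsEmpty {T : Tr (m + 3) // ∀ i, dg T.1 i = d i + 1} := by
          refine ⟨fun T => ?_⟩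
          have := ((isTree_iff_dg _).1 T.1.2).2
          simp only [T.2, Finset.sum_add_distrib] at this
          simp at this
          omega
        haveI : IsEmpty {e : Fin (m + 1) → Fin (m + 3) // ∀ i, ct e i = d i} := by
          refine ⟨fun e => ?_⟩
          have := ct_sum e.1
          simp only [e.2] at this
          omega
        exact ⟨Equiv.equivOfIsEmpty _ _⟩
    have hpos : ∀ T : Tr (m + 3), ∀ i, dg T.1 i = dg T.1 i - 1 + 1 := by
      intro T i
      have := T.2.connected.preconnected.degree_pos_of_nontrivial i
      rw [dg_eq_degree]
      omega
    let F : Tr (m + 3) → Fin (m + 3) → ℕ := fun T i => dg T.1 i - 1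
    have key2 : ∀ d, Nonempty ({T : Tr (m + 3) // F T = d} ≃
          {e : Fin (m + 1) → Fin (m + 3) // ct e = d}) := by
      intro d
      obtain ⟨A⟩ := key d
      refine ⟨(Equiv.subtypeEquivRight fun T => ?_).trans A⟩
      simp only [F, funext_iff]
      refine forall_congr' fun i => ?_
      have := hpos T i
      omega
    let A := fun d => Classical.choice (key2 d)
    refine ⟨(Equiv.sigmaFiberEquiv F).symm.trans ((Equiv.sigmaCongrRight A).trans
      (Equiv.sigmaFiberEquiv ct)), fun T i => ?_⟩
    have : ct (((Equiv.sigmaFiberEquiv F).symm.trans ((Equiv.sigmaCongrRight A).trans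
      (Equiv.sigmaFiberEquiv ct))) T) = F T := (A (F T) ⟨T, rfl⟩).2
    rw [this, hpos]

lemma urn {n : ℕ} (a : Fin n → ℕ) (N : ℕ) :
    (∑ e : Fin N → Fin n, ∏ i, (a i + ct e i).factorial) =
      (∏ i, (a i).factorial) * (∑ i, a i + n).ascFactorial N := by
  induction N with
  | zero => simp [ct]
  | succ N ih =>
    rw [← (Fin.consEquiv (fun _ : Fin (N + 1) => Fin n)).sum_comp, Fintype.sum_prod_type,
      Finset.sum_comm]
    have : ∀ e : Fin N → Fin n, ∑ w, ∏ i, (a i + ct (Fin.consEquiv (fun _ : Fin (N + 1) => Fin n) (w, e)) i).factorial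
        = (∏ i, (a i + ct e i).factorial) * (∑ i, a i + n + N) := by
      intro e
      have h1 : ∀ w, ∏ i, (a i + ct (Fin.consEquiv (fun _ : Fin (N + 1) => Fin n) (w, e)) i).factorial
          = (∏ i, (a i + ct e i).factorial) * (a w + ct e w + 1) := by
        intro w
        have : ∀ i, (a i + ct (Fin.consEquiv (fun _ : Fin (N + 1) => Fin n) (w, e)) i).factorial
           = (a i + ct e i).factorial * if i = w then (a i + ct e i + 1) else 1 := by
          intro i
          change (a i + ct (Fin.cons w e : Fin (N + 1) → Fin n) i).factorial = _
          rw [ct_cons]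
          split_ifs
          · rw [← add_assoc, Nat.factorial_succ, mul_comm]
          · rw [add_zero, mul_one]
        simp only [this, Finset.prod_mul_distrib]
        simp
      simp only [h1, ← Finset.mul_sum, Finset.sum_add_distrib, ct_sum]
      simp only [Finset.sum_const, Finset.card_univ, Fintype.card_fin, smul_eq_mul, mul_one]
      ring
    simp only [this, ← Finset.sum_mul, ih]
    rw [Nat.ascFactorial_succ]
    ring

lemma ct_append {m p n : ℕ} (e : Fin m → Fin n) (f : Fin p → Fin n) (i : Fin n) :
    ct (Fin.append e f) i = ct e i + ct f i := by
  simp only [ct, Fin.sum_univ_add, Fin.append_left, Fin.append_right]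

theorem decorated_tree_count (n k q : ℕ) (hk : 1 ≤ k) (hkn : k ≤ n) (hn : 2 ≤ n)
    (hqk : 2 ≤ 2 * q + k) :
    (1 / (n.factorial : ℚ)) *
        ∑ T : {G : SimpleGraph (Fin n) // G.IsTree},
          ∑ c : Fin k ↪ Fin n,
            ∑ mk : Fin (2 * q) → Fin n,
              ∏ i : Fin n,
                (((T.1.neighborSet i).ncard +
                    (if ∃ j, c j = i then 1 else 0) +
                    (Finset.univ.filter fun j => mk j = i).card - 1).factorial : ℚ)
      = ((2 * n - 1).choose (n - k) : ℚ) *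
          ((2 * n + 2 * q + k - 3).choose (2 * n - 1) : ℚ) *
          ((2 * q + k - 2).factorial : ℚ) := by
  obtain ⟨m, rfl⟩ : ∃ m, n = m + 2 := ⟨n - 2, by omega⟩
  obtain ⟨σ, hσ⟩ := pruefer m
  have hinner : ∀ c : Fin k ↪ Fin (m + 2),
      ∑ e : Fin m → Fin (m + 2), ∑ mk : Fin (2 * q) → Fin (m + 2), ∏ i,
        ((if ∃ j, c j = i then 1 else 0) + (ct e i + ct mk i)).factorial
      = (k + (m + 2)).ascFactorial (m + 2 * q) := by
    intro c
    have h := urn (fun i => if ∃ j, c j = i then 1 else 0) (m + 2 * q)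
    rw [← (Fin.appendEquiv m (2 * q)).sum_comp, Fintype.sum_prod_type] at h
    have hA : ∑ i, (if ∃ j, c j = i then 1 else 0) = k := by
      have : (Finset.univ.filter fun i => ∃ j, c j = i) = Finset.univ.map c := by
        ext; simp
      rw [← Finset.sum_filter, this]
      simp
    have hP : ∏ i : Fin (m + 2), (if ∃ j, c j = i then 1 else 0).factorial = 1 :=
      Finset.prod_eq_one fun i _ => by split_ifs <;> rfl
    rw [hA, hP, one_mul] at h
    rw [← h]
    simp [Fin.appendEquiv, ct_append]
  have hsum : (∑ T : {G : SimpleGraph (Fin (m + 2)) // G.IsTree},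
          ∑ c : Fin k ↪ Fin (m + 2),
            ∑ mk : Fin (2 * q) → Fin (m + 2),
              ∏ i : Fin (m + 2),
                (((T.1.neighborSet i).ncard +
                    (if ∃ j, c j = i then 1 else 0) +
                    (Finset.univ.filter fun j => mk j = i).card - 1).factorial : ℚ))
      = (((m + 2).descFactorial k * (k + (m + 2)).ascFactorial (m + 2 * q) : ℕ) : ℚ) := by
    have h1 : ∀ (T : {G : SimpleGraph (Fin (m + 2)) // G.IsTree}) (c : Fin k ↪ Fin (m + 2))
        (mk : Fin (2 * q) → Fin (m + 2)) (i : Fin (m + 2)),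
        ((T.1.neighborSet i).ncard + (if ∃ j, c j = i then 1 else 0) +
          (Finset.univ.filter fun j => mk j = i).card - 1)
        = (if ∃ j, c j = i then 1 else 0) + (ct (σ T) i + ct mk i) := by
      intro T c mk i
      rw [dg_eq_ncard, hσ, Finset.card_filter]
      simp only [ct]
      omega
    simp only [h1]
    rw [Finset.sum_comm]
    have h2 : ∀ c : Fin k ↪ Fin (m + 2), (∑ T : {G : SimpleGraph (Fin (m + 2)) // G.IsTree},
        ∑ mk : Fin (2 * q) → Fin (m + 2), ∏ i,
          (((if ∃ j, c j = i then 1 else 0) + (ct (σ T) i + ct mk i)).factorial : ℚ))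
        = ((k + (m + 2)).ascFactorial (m + 2 * q) : ℕ) := by
      intro c
      rw [← hinner c, ← σ.sum_comp]
      push_cast
      rfl
    simp only [h2]
    simp [Fintype.card_embedding_eq]
  rw [hsum]
  have e1 := Nat.factorial_mul_descFactorial hkn
  have e2 := Nat.factorial_mul_ascFactorial (k + (m + 1)) (m + 2 * q)
  have e3 := Nat.choose_mul_factorial_mul_factorial (show m + 2 - k ≤ 2 * (m + 2) - 1 by omega)
  have e4 := Nat.choose_mul_factorial_mul_factorial
    (show 2 * (m + 2) - 1 ≤ 2 * (m + 2) + 2 * q + k - 3 by omega)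
  rw [show 2 * (m + 2) - 1 - (m + 2 - k) = k + (m + 1) by omega] at e3
  rw [show 2 * (m + 2) + 2 * q + k - 3 - (2 * (m + 2) - 1) = 2 * q + k - 2 by omega,
    show 2 * (m + 2) + 2 * q + k - 3 = k + (m + 1) + (m + 2 * q) by omega] at e4
  rw [show 2 * (m + 2) + 2 * q + k - 3 = k + (m + 1) + (m + 2 * q) by omega]
  rw [show k + (m + 1) + 1 = k + (m + 2) by omega] at e2
  have p1 : ((m + 2 - k).factorial : ℚ) ≠ 0 := by positivity
  have p2 : ((k + (m + 1)).factorial : ℚ) ≠ 0 := by positivity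
  have p4 : ((m + 2).factorial : ℚ) ≠ 0 := by positivity
  have e1' := congrArg (Nat.cast (R := ℚ)) e1
  have e2' := congrArg (Nat.cast (R := ℚ)) e2
  have e3' := congrArg (Nat.cast (R := ℚ)) e3
  have e4' := congrArg (Nat.cast (R := ℚ)) e4
  rw [Nat.cast_mul] at e1' e2' ⊢
  rw [Nat.cast_mul, Nat.cast_mul] at e3' e4'
  rw [div_mul_eq_mul_div, one_mul, div_eq_iff p4]
  apply mul_left_cancel₀ (mul_ne_zero p1 p2)
  rw [← e1', ← e3', ← e2'] at *
  linear_combination (-((m + 2 - k).factorial : ℚ) * ((m + 2).descFactorial k : ℚ)) * e4'
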